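/- Let (V, c) be a finite-dimensional braided vector space that is left triangular with respect to the totally ordered basis X, let u be a Lyndon word, and let p, q be positive integers. Write X^q_{≫u} for the set of words v of length q with v ≫ u. Then c_{p,q}(V^{⊗p} ⊗ kX^q_{≫u}) ⊆ kX^q_{≫u} ⊗ V^{⊗p}. -/

import Mathlib

/-!
We identify the finite-dimensional vector space `V` with basis `X` with the free
`k`-module on `X`, and the tensor power `V^{⊗n}` with the free `k`-module on the
words of length `n` in letters from `X`; correspondingly `V^{⊗n} ⊗ V^{⊗m}` is the
free `k`-module on pairs of words.  A linear endomorphism `c` of `V ⊗ V` is encoded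
by its matrix `c : X → X → ((X × X) →₀ k)`, via `c(x ⊗ y) = Σ_{(z,w)} c x y (z,w) • z ⊗ w`.
-/

variable {k : Type*} [Field k] {X : Type*} [Fintype X] [LinearOrder X]

/-- The maps `c_{1,m} : V ⊗ V^{⊗m} → V^{⊗m} ⊗ V`, defined on basis vectors by
`c_{1,0} = id` and `c_{1,m+1} = (id_V ⊗ c_{1,m}) ∘ (c ⊗ id_{V^{⊗m}})`. -/
noncomputable def braidOne (c : X → X → ((X × X) →₀ k)) :
    X → List X → ((List X × List X) →₀ k)
  | x, [] => Finsupp.single ([], [x]) 1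
  | x, y :: v =>
      (c x y).sum fun p a =>
        a • Finsupp.mapDomain (fun q : List X × List X => (p.1 :: q.1, q.2))
          (braidOne c p.2 v)

/-- Auxiliary version of `c_{n,m}` where the first word is given reversed:
`c_{0,m} = id` and `c_{n+1,m} = (c_{n,m} ⊗ id_V) ∘ (id_{V^{⊗n}} ⊗ c_{1,m})`. -/
noncomputable def braidRev (c : X → X → ((X × X) →₀ k)) :
    List X → List X → ((List X × List X) →₀ k)
  | [], v => Finsupp.single (v, []) 1
  | x :: urev, v =>
      (braidOne c x v).sum fun p a =>
        a • Finsupp.mapDomain (fun q : List X × List X => (q.1, q.2 ++ p.2))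
          (braidRev c urev p.1)

/-- The braiding maps `c_{n,m} : V^{⊗n} ⊗ V^{⊗m} → V^{⊗m} ⊗ V^{⊗n}` on basis vectors:
`braidWords c u v` is `c_{l(u),l(v)}(u ⊗ v)`. -/
noncomputable def braidWords (c : X → X → ((X × X) →₀ k)) (u v : List X) :
    (List X × List X) →₀ k :=
  braidRev c u.reverse v

/-- `c` is left triangular with respect to the ordered basis `X`:
`c(x ⊗ y) = γ_{x,y} • y ⊗ x + Σ_{z > y} z ⊗ v_{x,y,z}`, i.e. the coefficient of
`c(x ⊗ y)` at `z ⊗ w` vanishes unless `(z, w) = (y, x)` or `z > y`. -/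
def LeftTriangularMat (c : X → X → ((X × X) →₀ k)) : Prop :=
  ∀ (x y : X) (zw : X × X), c x y zw ≠ 0 → (zw.1 = y ∧ zw.2 = x) ∨ y < zw.1

/-- `c ⊗ id` acting on `V ⊗ V ⊗ V` (matrix form). -/
noncomputable def act12 (c : X → X → ((X × X) →₀ k)) (f : (X × X × X) →₀ k) :
    (X × X × X) →₀ k :=
  f.sum fun t a => a • ((c t.1 t.2.1).sum fun p b => Finsupp.single (p.1, p.2, t.2.2) b)

/-- `id ⊗ c` acting on `V ⊗ V ⊗ V` (matrix form). -/
noncomputable def act23 (c : X → X → ((X × X) →₀ k)) (f : (X × X × X) →₀ k) :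
    (X × X × X) →₀ k :=
  f.sum fun t a => a • ((c t.2.1 t.2.2).sum fun p b => Finsupp.single (t.1, p.1, p.2) b)

/-- `c` satisfies the braid equation
`(c ⊗ id)(id ⊗ c)(c ⊗ id) = (id ⊗ c)(c ⊗ id)(id ⊗ c)`. -/
def SatisfiesBraidEq (c : X → X → ((X × X) →₀ k)) : Prop :=
  ∀ f : (X × X × X) →₀ k,
    act12 c (act23 c (act12 c f)) = act23 c (act12 c (act23 c f))

/-- The linear extension of `c` to an endomorphism of `V ⊗ V`. -/
noncomputable def extendMat (c : X → X → ((X × X) →₀ k)) (f : (X × X) →₀ k) :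
    (X × X) →₀ k :=
  f.sum fun p a => a • c p.1 p.2

/-- The coefficient `γ_{u,v} = Π_{x ∈ u} Π_{y ∈ v} γ x y`. -/
def gammaWords (γ : X → X → k) (u v : List X) : k :=
  (u.map fun x => (v.map fun y => γ x y).prod).prod

/-- A word `u` is a Lyndon word if it is nonempty and lexicographically smaller than
each of its proper nonempty suffixes. -/
def IsLyndon {X : Type*} [LinearOrder X] (u : List X) : Prop :=
  u ≠ [] ∧ ∀ v w : List X, v ≠ [] → w ≠ [] → u = v ++ w → List.Lex (· < ·) u w

/-- `ls` is a Lyndon factorization of `u`: all factors are Lyndon words, the factors are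
(lexicographically) nonincreasing, and their concatenation is `u`. -/
def IsLyndonFactorization {X : Type*} [LinearOrder X] (ls : List (List X)) (u : List X) : Prop :=
  (∀ l ∈ ls, IsLyndon l) ∧ ls.Chain' (fun a b => ¬ List.Lex (· < ·) a b) ∧ ls.flatten = u

/-- `v ≫ u` : the first Lyndon letter of the Lyndon decomposition of `v` is
lexicographically greater than `u`. -/
def MuchGt {X : Type*} [LinearOrder X] (v u : List X) : Prop :=
  ∃ (l : List X) (t : List (List X)),
    IsLyndonFactorization (l :: t) v ∧ List.Lex (· < ·) u l

/-!
The first Lyndon letter of a word is monotone for the lexicographic order. Indeed, if `l` is a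
Lyndon word, then any product of words smaller than `l` is smaller than `l`; hence `l ≤ z` forces
`l ≤ l'` for the first Lyndon letter `l'` of `z`, as the other letters of `z` are at most `l'`.
In particular `v ≫ u` and `v ≤ z` imply `z ≫ u`. Triangularity ensures that moving a letter past
a word `v` only produces words `z ≥ v` of the same length.
-/

section Words

variable {X : Type*} [LinearOrder X]

theorem append_lt_of_lt_of_not_isPrefix {a b : List X} (h : a < b) (hab : ¬ a <+: b)
    (s : List X) : a ++ s < b := by
  change List.Lex (· < ·) a b at h
  induction h with
  | nil => exact absurd List.nil_prefix hab
  | rel hxy => exact List.Lex.rel hxy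
  | cons _ ih => exact List.Lex.cons (ih fun hp => hab ((List.prefix_cons_inj _).2 hp))

theorem self_le_append (a s : List X) : a ≤ a ++ s :=
  le_of_not_gt (List.le_append_left (l₁ := a) (l₂ := s))

theorem isLyndon_singleton (x : X) : IsLyndon [x] := by
  refine ⟨List.cons_ne_nil _ _, fun v w hv hw h => ?_⟩
  rcases List.append_eq_singleton_iff.1 h.symm with ⟨rfl, -⟩ | ⟨-, rfl⟩
  exacts [absurd rfl hv, absurd rfl hw]

namespace IsLyndon

variable {a l s v w : List X}

theorem nil_lt (h : IsLyndon l) : [] < l :=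
  (List.lex_nil_or_eq_nil l).resolve_right h.1

theorem lt_suffix (h : IsLyndon (v ++ w)) (hv : v ≠ []) (hw : w ≠ []) : v ++ w < w :=
  h.2 v w hv hw rfl

theorem append_lt (hl : IsLyndon l) (ha : a ≠ []) (hal : a < l) (hs : s ≤ l) : a ++ s < l := by
  by_cases hp : a <+: l
  · obtain ⟨t, rfl⟩ := hp
    have ht : t ≠ [] := by
      rintro rfl
      simp at hal
    exact List.append_left_lt (hs.trans_lt (hl.lt_suffix ha ht))
  · exact append_lt_of_lt_of_not_isPrefix hal hp s

theorem flatten_lt (hl : IsLyndon l) {ws : List (List X)} (hws : ∀ w ∈ ws, w < l) :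
    ws.flatten < l := by
  induction ws with
  | nil => exact hl.nil_lt
  | cons w ws ih =>
    obtain ⟨hw, ht⟩ := List.forall_mem_cons.1 hws
    rcases eq_or_ne w [] with rfl | hne
    · exact ih ht
    · exact hl.append_lt hne hw (ih ht).le

protected theorem append (ha : IsLyndon a) (hl : IsLyndon l) (hal : a < l) :
    IsLyndon (a ++ l) := by
  have hlt : a ++ l < l := hl.append_lt ha.1 hal le_rfl
  refine ⟨List.append_ne_nil_of_left_ne_nil ha.1 l, fun v w hv hw hvw => ?_⟩
  rcases List.append_eq_append_iff.1 hvw with ⟨r, rfl, rfl⟩ | ⟨r, rfl, rfl⟩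
  · rcases eq_or_ne r [] with rfl | hr
    · exact hlt
    · exact hlt.trans (hl.lt_suffix hr hw)
  · rcases eq_or_ne r [] with rfl | hr
    · rwa [List.append_nil] at hlt ⊢
    · have hpre : ¬ v ++ r <+: r := fun hp => hv (by simpa using hp.length_le)
      exact (append_lt_of_lt_of_not_isPrefix (ha.lt_suffix hv hr) hpre l).trans_le
        (self_le_append r l)

theorem exists_factorization_append (ha : IsLyndon a) {ls : List (List X)}
    (h : IsLyndonFactorization ls v) : ∃ ms, IsLyndonFactorization ms (a ++ v) := by
  induction ls generalizing a v with
  | nil =>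
    obtain ⟨-, -, rfl⟩ := h
    exact ⟨[a], by simpa using ha, List.isChain_singleton a, rfl⟩
  | cons l t ih =>
    obtain ⟨hlyndon, hchain, rfl⟩ := h
    obtain ⟨hl, ht⟩ := List.forall_mem_cons.1 hlyndon
    by_cases hal : a < l
    · simpa using ih (ha.append hl hal) ⟨ht, hchain.tail, rfl⟩
    · exact ⟨a :: l :: t, List.forall_mem_cons.2 ⟨ha, hlyndon⟩,
        List.isChain_cons_cons.2 ⟨hal, hchain⟩, rfl⟩

end IsLyndon

theorem exists_isLyndonFactorization (v : List X) : ∃ ls, IsLyndonFactorization ls v := by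
  induction v with
  | nil => exact ⟨[], by simp, List.isChain_nil, rfl⟩
  | cons x v ih =>
    obtain ⟨ls, h⟩ := ih
    exact (isLyndon_singleton x).exists_factorization_append h

namespace IsLyndonFactorization

variable {l m z : List X} {t : List (List X)}

theorem le_head (h : IsLyndonFactorization (l :: t) z) (hm : m ∈ l :: t) : m ≤ l := by
  have hchain : (l :: t).IsChain (· ≥ ·) := h.2.1.imp fun _ _ => le_of_not_gt
  rcases List.mem_cons.1 hm with rfl | hm
  exacts [le_rfl, hchain.rel_cons hm]

theorem le_head_of_isLyndon (h : IsLyndonFactorization (l :: t) z) (hm : IsLyndon m)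
    (hmz : m ≤ z) : m ≤ l := by
  by_contra! hlm
  have hzm : (l :: t).flatten < m := hm.flatten_lt fun _ hw => (h.le_head hw).trans_lt hlm
  rw [h.2.2] at hzm
  exact hmz.not_gt hzm

end IsLyndonFactorization

theorem MuchGt.mono {u v z : List X} (hv : MuchGt v u) (hvz : v ≤ z) : MuchGt z u := by
  obtain ⟨l, t, ⟨hlyndon, -, rfl⟩, hul⟩ := hv
  have hl : IsLyndon l := hlyndon l List.mem_cons_self
  have hlz : l ≤ z := (self_le_append l t.flatten).trans hvz
  obtain ⟨ls, hls⟩ := exists_isLyndonFactorization z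
  cases ls with
  | nil =>
    obtain ⟨-, -, rfl⟩ := hls
    exact absurd hl.nil_lt hlz.not_gt
  | cons l' t' => exact ⟨l', t', hls, lt_of_lt_of_le hul (hls.le_head_of_isLyndon hl hlz)⟩

end Words

section Support

theorem exists_of_mem_support_sum_smul_mapDomain {R ι α β : Type*} [Semiring R] {g : ι →₀ R}
    {f : ι → α → β} {h : ι → α →₀ R} {b : β}
    (hb : b ∈ (g.sum fun i r => r • Finsupp.mapDomain (f i) (h i)).support) :
    ∃ i ∈ g.support, ∃ a ∈ (h i).support, f i a = b := by
  classical
  obtain ⟨i, hi, hb⟩ := Finset.mem_biUnion.1 (Finsupp.support_sum hb)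
  exact ⟨i, hi, Finset.mem_image.1 (Finsupp.mapDomain_support (Finsupp.support_smul hb))⟩

variable {k : Type*} [Field k] {X : Type*} {c : X → X → ((X × X) →₀ k)} {x : X} {w v : List X}
  {r : List X × List X}

theorem length_of_mem_support_braidOne (hr : r ∈ (braidOne c x v).support) :
    r.1.length = v.length ∧ r.2.length = 1 := by
  induction v generalizing x r with
  | nil =>
    obtain rfl := Finset.mem_singleton.1 (Finsupp.support_single_subset hr)
    exact ⟨rfl, rfl⟩
  | cons y v ih =>
    obtain ⟨p, -, s, hs, rfl⟩ := exists_of_mem_support_sum_smul_mapDomain hr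
    exact ⟨congrArg Nat.succ (ih hs).1, (ih hs).2⟩

theorem length_of_mem_support_braidRev (hr : r ∈ (braidRev c w v).support) :
    r.1.length = v.length ∧ r.2.length = w.length := by
  induction w generalizing v r with
  | nil =>
    obtain rfl := Finset.mem_singleton.1 (Finsupp.support_single_subset hr)
    exact ⟨rfl, rfl⟩
  | cons x w ih =>
    obtain ⟨p, hp, s, hs, rfl⟩ := exists_of_mem_support_sum_smul_mapDomain hr
    obtain ⟨hp₁, hp₂⟩ := length_of_mem_support_braidOne hp
    obtain ⟨hs₁, hs₂⟩ := ih hs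
    exact ⟨hs₁.trans hp₁, by simp [hs₂, hp₂]⟩

variable [LinearOrder X]

theorem LeftTriangularMat.le_of_mem_support (hc : LeftTriangularMat c) {x y : X} {r : X × X}
    (hr : r ∈ (c x y).support) : y ≤ r.1 :=
  (hc x y r (Finsupp.mem_support_iff.1 hr)).elim (fun h => h.1.ge) le_of_lt

theorem le_of_mem_support_braidOne (hc : ∀ x y, ∀ r ∈ (c x y).support, y ≤ r.1)
    (hr : r ∈ (braidOne c x v).support) : v ≤ r.1 := by
  induction v generalizing x r with
  | nil => exact le_of_not_gt (List.not_lt_nil _)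
  | cons y v ih =>
    obtain ⟨p, hp, s, hs, rfl⟩ := exists_of_mem_support_sum_smul_mapDomain hr
    rcases (hc x y p hp).lt_or_eq with hlt | rfl
    · exact le_of_lt (List.Lex.rel hlt)
    · exact List.cons_le_cons _ (ih hs)

theorem le_of_mem_support_braidRev (hc : ∀ x y, ∀ r ∈ (c x y).support, y ≤ r.1)
    (hr : r ∈ (braidRev c w v).support) : v ≤ r.1 := by
  induction w generalizing v r with
  | nil =>
    obtain rfl := Finset.mem_singleton.1 (Finsupp.support_single_subset hr)
    exact le_rfl
  | cons x w ih =>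
    obtain ⟨p, hp, s, hs, rfl⟩ := exists_of_mem_support_sum_smul_mapDomain hr
    have hvp : v ≤ p.1 := le_of_mem_support_braidOne hc hp
    have hps : p.1 ≤ s.1 := ih hs
    exact hvp.trans hps

end Support

theorem braidWords_muchGt_general {k : Type*} [Field k] {X : Type*} [LinearOrder X]
    {c : X → X → ((X × X) →₀ k)} (hc : ∀ x y, ∀ r ∈ (c x y).support, y ≤ r.1)
    {u v : List X} (w : List X) (hvu : MuchGt v u) :
    braidWords c w v ∈
      Submodule.span k {f : (List X × List X) →₀ k |
        ∃ z a : List X, z.length = v.length ∧ MuchGt z u ∧ a.length = w.length ∧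
          f = Finsupp.single (z, a) 1} := by
  have hmem : braidWords c w v ∈ Finsupp.supported k k
      {r | r.1.length = v.length ∧ MuchGt r.1 u ∧ r.2.length = w.length} := by
    refine (Finsupp.mem_supported k _).2 fun r hr => ?_
    obtain ⟨hz, ha⟩ := length_of_mem_support_braidRev hr
    have hvz : v ≤ r.1 := le_of_mem_support_braidRev hc hr
    exact ⟨hz, hvu.mono hvz, by simpa using ha⟩
  rw [Finsupp.supported_eq_span_single] at hmem
  refine Submodule.span_mono ?_ hmem
  rintro _ ⟨⟨z, a⟩, ⟨hz, hzu, ha⟩, rfl⟩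
  exact ⟨z, a, hz, hzu, ha, rfl⟩

/-- Let `(V, c)` be a finite-dimensional braided vector space, left triangular with
respect to `X`, let `u` be a Lyndon word, and `p, q` positive integers.  Then
`c_{p,q}(V^{⊗p} ⊗ k X^q_{≫u}) ⊆ k X^q_{≫u} ⊗ V^{⊗p}`. -/
theorem braidWords_muchGt
    (c : X → X → ((X × X) →₀ k))
    (hcbij : Function.Bijective (extendMat c))
    (hcbraid : SatisfiesBraidEq c)
    (hctri : LeftTriangularMat c)
    (u : List X) (hu : IsLyndon u)
    (p q : ℕ) (hp : 0 < p) (hq : 0 < q)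
    (w v : List X) (hw : w.length = p) (hv : v.length = q) (hvu : MuchGt v u) :
    braidWords c w v ∈
      Submodule.span k {f : (List X × List X) →₀ k |
        ∃ z a : List X, z.length = q ∧ MuchGt z u ∧ a.length = p ∧
          f = Finsupp.single (z, a) 1} := by
  subst hw hv
  exact braidWords_muchGt_general (fun _ _ _ => hctri.le_of_mem_support) w hvu
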